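/- Let Σ be an alphabet with at least two symbols and fix b ∈ Σ. For any constants h₁, h₂ ≥ 1 and any M ≥ 1, there exist regular languages L₁, L₂ over Σ such that tc_b(Lᵢ) = hᵢ (i = 1, 2) and tc_b(L₁ ∪ L₂) ≥ M. -/

import Mathlib

/-- An incomplete DFA over alphabet `α` with state type `σ`:
the transition function is a partial function, modelled as `Option`-valued. -/
structure IDFA (α : Type) (σ : Type) where
  /-- The (partial) transition function. -/
  step : σ → α → Option σ
  /-- The start state. -/
  start : σ
  /-- The set of accepting states. -/
  accept : Set σ

namespace IDFA

variable {α σ : Type}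

/-- The extended (partial) transition function on words. -/
def evalFrom (A : IDFA α σ) (q : σ) (w : List α) : Option σ :=
  w.foldl (fun oq a => oq.bind fun p => A.step p a) (some q)

/-- Running the automaton from the start state. -/
def eval (A : IDFA α σ) (w : List α) : Option σ :=
  A.evalFrom A.start w

/-- The language recognized by an incomplete DFA: words on which the run is
defined and ends in an accepting state. -/
def accepts (A : IDFA α σ) : Set (List α) :=
  {w | ∃ q ∈ A.accept, A.eval w = some q}

/-- `#tr(A)`: the number of (defined) transitions of `A`. -/
noncomputable def trCount (A : IDFA α σ) : ℕ :=
  {p : σ × α | (A.step p.1 p.2).isSome}.ncard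

/-- `#tr(A, b)`: the number of `b`-transitions of `A`. -/
noncomputable def trCountOn (A : IDFA α σ) (b : α) : ℕ :=
  {q : σ | (A.step q b).isSome}.ncard

/-- An incomplete DFA is connected if every state is reachable from the start state. -/
def Connected (A : IDFA α σ) : Prop :=
  ∀ q : σ, ∃ w : List α, A.evalFrom A.start w = some q

end IDFA

/-- A language is regular iff it is recognized by some incomplete DFA with
finitely many states. -/
def IsRegularLang {α : Type} (L : Set (List α)) : Prop :=
  ∃ (σ : Type) (_ : Finite σ) (A : IDFA α σ), A.accepts = L

/-- `tc(L)`: the transition complexity of `L`, i.e. the minimal number of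
transitions of any incomplete DFA recognizing `L`. -/
noncomputable def tc {α : Type} (L : Set (List α)) : ℕ :=
  sInf {n | ∃ (σ : Type) (_ : Finite σ) (A : IDFA α σ), A.accepts = L ∧ A.trCount = n}

/-- `tc_b(L)`: the `b`-transition complexity of `L`, i.e. the minimal number of
`b`-transitions of any incomplete DFA recognizing `L`. -/
noncomputable def tcOn {α : Type} (L : Set (List α)) (b : α) : ℕ :=
  sInf {n | ∃ (σ : Type) (_ : Finite σ) (A : IDFA α σ), A.accepts = L ∧ A.trCountOn b = n}

/-- `sc(L)`: the (incomplete-DFA) state complexity of `L`, i.e. the number of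
states of a minimal incomplete DFA recognizing `L`. -/
noncomputable def sc {α : Type} (L : Set (List α)) : ℕ :=
  sInf {n | ∃ (σ : Type) (_ : Finite σ) (A : IDFA α σ), A.accepts = L ∧ Nat.card σ = n}

namespace IDFA

theorem evalFrom_none {α σ : Type} (A : IDFA α σ) (w : List α) :
    w.foldl (fun oq a => oq.bind fun p => A.step p a) none = none := by
  induction w with
  | nil => rfl
  | cons x w ih => simpa using ih

theorem evalFrom_cons {α σ : Type} (A : IDFA α σ) (q : σ) (x : α) (w : List α) :
    A.evalFrom q (x :: w) = (A.step q x).bind fun p => A.evalFrom p w := by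
  unfold evalFrom
  rw [List.foldl_cons, Option.bind_some]
  cases A.step q x with
  | none => simpa using A.evalFrom_none w
  | some p => rfl

theorem evalFrom_append {α σ : Type} (A : IDFA α σ) (q : σ) (v w : List α) :
    A.evalFrom q (v ++ w) = (A.evalFrom q v).bind fun p => A.evalFrom p w := by
  induction v generalizing q with
  | nil => rfl
  | cons x v ih =>
    rw [List.cons_append, evalFrom_cons, evalFrom_cons]
    cases A.step q x with
    | none => rfl
    | some p => simpa using ih p

theorem evalFrom_nil {α σ : Type} (A : IDFA α σ) (q : σ) : A.evalFrom q [] = some q := rfl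

theorem le_trCountOn {α σ : Type} [Finite σ] (A : IDFA α σ) (b : α) (n : ℕ)
    (w u : Fin n → List α) (hu : ∀ i, w i ++ b :: u i ∈ A.accepts)
    (hd : ∀ i j, i < j → ∃ v, ¬ (w i ++ v ∈ A.accepts ↔ w j ++ v ∈ A.accepts)) :
    n ≤ A.trCountOn b := by
  have h : ∀ i, ∃ q, A.eval (w i) = some q ∧ (A.step q b).isSome := by
    intro i
    obtain ⟨p, -, hp⟩ := hu i
    unfold eval at hp
    rw [evalFrom_append] at hp
    obtain ⟨q, hq, hp⟩ := Option.bind_eq_some_iff.1 hp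
    rw [evalFrom_cons] at hp
    obtain ⟨r, hr, hp⟩ := Option.bind_eq_some_iff.1 hp
    exact ⟨q, hq, by simp [hr]⟩
  choose f hf hs using h
  have hne : ∀ i j, i < j → f i ≠ f j := by
    intro i j hij he
    obtain ⟨v, hv⟩ := hd i j hij
    apply hv
    have : A.eval (w i ++ v) = A.eval (w j ++ v) := by
      unfold eval at *
      rw [evalFrom_append, evalFrom_append, hf, hf, he]
    simp only [accepts, Set.mem_ofPred_eq, this]
  have hinj : Function.Injective f := by
    intro i j he
    rcases lt_trichotomy i j with h | h | h
    · exact absurd he (hne _ _ h)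
    · exact h
    · exact absurd he.symm (hne _ _ h)
  have h1 : (Set.range f).ncard = n := by
    rw [← Set.image_univ, Set.ncard_image_of_injective _ hinj, Set.ncard_univ, Nat.card_fin]
  rw [← h1]
  apply Set.ncard_le_ncard _ (Set.toFinite _)
  rintro _ ⟨i, rfl⟩
  exact hs i

/-- product automaton for the union -/
def prodU {α σ τ : Type} (A : IDFA α σ) (B : IDFA α τ) : IDFA α (Option σ × Option τ) where
  step p x := some (p.1.bind fun q => A.step q x, p.2.bind fun q => B.step q x)
  start := (some A.start, some B.start)
  accept := {p | (∃ q ∈ A.accept, p.1 = some q) ∨ (∃ q ∈ B.accept, p.2 = some q)}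

theorem prodU_evalFrom {α σ τ : Type} (A : IDFA α σ) (B : IDFA α τ) (w : List α)
    (p : Option σ × Option τ) :
    (prodU A B).evalFrom p w = some (p.1.bind fun q => A.evalFrom q w,
      p.2.bind fun q => B.evalFrom q w) := by
  induction w generalizing p with
  | nil => rcases p with ⟨_ | _, _ | _⟩ <;> rfl
  | cons x w ih =>
    rw [evalFrom_cons]
    simp only [evalFrom_cons, prodU, Option.bind_some]
    have := ih (p.1.bind fun q => A.step q x, p.2.bind fun q => B.step q x)
    rw [prodU] at this
    rw [this]
    simp only [Option.bind_assoc]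

theorem prodU_accepts {α σ τ : Type} (A : IDFA α σ) (B : IDFA α τ) :
    (prodU A B).accepts = A.accepts ∪ B.accepts := by
  ext w
  simp only [accepts, eval, prodU_evalFrom, Set.mem_union, Set.mem_ofPred_eq]
  simp [prodU]

open Classical in
/-- The witness automaton. -/
noncomputable def wit {α : Type} (a b : α) (M h t : ℕ) : IDFA α (ZMod M × Fin (h + 2)) where
  step p x :=
    if x = b then
      if hp : p.1 = 0 ∧ p.2.1 < h then some (p.1, ⟨p.2.1 + 1, by omega⟩) else none
    else if x = a then
      if p.2.1 = 0 then some (p.1 + 1, p.2)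
      else if p.2.1 = h then some (p.1, ⟨h + 1, by omega⟩) else none
    else none
  start := (0, ⟨0, by omega⟩)
  accept := {p | p.1 = 0 ∧ p.2.1 = t}

theorem wit_a {α : Type} {a b : α} (hab : a ≠ b) (M h t i : ℕ) (r : ZMod M) :
    (wit a b M h t).evalFrom (r, ⟨0, by omega⟩) (List.replicate i a) =
      some (r + i, ⟨0, by omega⟩) := by
  induction i generalizing r with
  | zero => simp [evalFrom_nil]
  | succ i ih =>
    rw [List.replicate_succ, evalFrom_cons]
    have : (wit a b M h t).step (r, ⟨0, by omega⟩) a = some (r + 1, ⟨0, by omega⟩) := by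
      simp [wit, hab]
    rw [this, Option.bind_some, ih]
    push_cast
    congr 2
    ring

theorem wit_b {α : Type} {a b : α} (M h t j : ℕ) (r : ZMod M) (k : ℕ) (hk : k < h + 2)
    (q : ZMod M × Fin (h + 2)) :
    (wit a b M h t).evalFrom (r, ⟨k, hk⟩) (List.replicate j b) = some q ↔
      (j = 0 ∨ (r = 0 ∧ k + j ≤ h)) ∧ q.1 = r ∧ q.2.1 = k + j := by
  induction j generalizing k with
  | zero =>
    simp only [List.replicate_zero, evalFrom_nil, Option.some.injEq, Prod.ext_iff, Fin.ext_iff]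
    simp [eq_comm]
  | succ j ih =>
    rw [List.replicate_succ, evalFrom_cons]
    by_cases hc : r = 0 ∧ k < h
    · have : (wit a b M h t).step (r, ⟨k, hk⟩) b = some (r, ⟨k + 1, by omega⟩) := by
        simp [wit, hc]
      rw [this, Option.bind_some, ih]
      obtain ⟨h1, h2⟩ := hc
      simp only [h1, true_and]
      constructor
      · rintro ⟨x, y, z⟩
        exact ⟨by omega, y, by omega⟩
      · rintro ⟨x, y, z⟩
        exact ⟨by omega, y, by omega⟩
    · have : (wit a b M h t).step (r, ⟨k, hk⟩) b = none := by
        simp only [wit, if_true]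
        rw [dif_neg hc]
      rw [this]
      simp only [Option.bind_none, reduceCtorEq, false_iff]
      rintro ⟨x | x, y, z⟩
      · omega
      · exact hc ⟨x.1, by omega⟩

theorem wit_ab {α : Type} {a b : α} (hab : a ≠ b) (M h t i j : ℕ) (q : ZMod M × Fin (h + 2)) :
    (wit a b M h t).eval (List.replicate i a ++ List.replicate j b) = some q ↔
      (j = 0 ∨ ((i : ZMod M) = 0 ∧ j ≤ h)) ∧ q.1 = i ∧ q.2.1 = j := by
  unfold eval
  rw [evalFrom_append]
  have := wit_a hab M h t i 0
  rw [zero_add] at this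
  have e : (wit a b M h t).start = (0, ⟨0, by omega⟩) := rfl
  rw [e, this, Option.bind_some, wit_b]
  simp

theorem mem_wit_ab {α : Type} {a b : α} (hab : a ≠ b) (M h i j : ℕ) :
    (List.replicate i a ++ List.replicate j b) ∈ (wit a b M h h).accepts ↔
      (i : ZMod M) = 0 ∧ j = h := by
  constructor
  · rintro ⟨q, ⟨h1, h2⟩, hq⟩
    rw [wit_ab hab] at hq
    exact ⟨hq.2.1 ▸ h1, hq.2.2 ▸ h2⟩
  · rintro ⟨h1, rfl⟩
    exact ⟨(0, ⟨j, by omega⟩), ⟨rfl, rfl⟩, (wit_ab hab _ _ _ _ _ _).2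
      ⟨Or.inr ⟨h1, le_rfl⟩, h1.symm, rfl⟩⟩

theorem mem_wit_aba {α : Type} {a b : α} (hab : a ≠ b) (M h t i j : ℕ) (hj : 1 ≤ j) :
    (List.replicate i a ++ List.replicate j b ++ [a]) ∈ (wit a b M h t).accepts ↔
      (i : ZMod M) = 0 ∧ j = h ∧ t = h + 1 := by
  constructor
  · rintro ⟨q, ⟨h1, h2⟩, hq⟩
    unfold eval at hq
    rw [evalFrom_append] at hq
    obtain ⟨p, hp, hq⟩ := Option.bind_eq_some_iff.1 hq
    have hp := (wit_ab hab M h t i j p).1 hp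
    obtain ⟨x, y, z⟩ := hp
    rw [evalFrom_cons] at hq
    obtain ⟨s, hs, hq⟩ := Option.bind_eq_some_iff.1 hq
    rw [evalFrom_nil] at hq
    cases hq
    simp only [wit, hab, if_false, if_true] at hs
    rw [if_neg (by omega)] at hs
    split_ifs at hs with hh
    cases hs
    simp only at h1 h2
    exact ⟨y ▸ h1, by omega, h2.symm⟩
  · rintro ⟨h1, rfl, rfl⟩
    refine ⟨(0, ⟨j + 1, by omega⟩), ⟨rfl, rfl⟩, ?_⟩
    unfold eval
    rw [evalFrom_append]
    have := (wit_ab hab M j (j+1) i j (0, ⟨j, by omega⟩)).2 ⟨Or.inr ⟨h1, le_rfl⟩, h1.symm, rfl⟩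
    unfold eval at this
    rw [this, Option.bind_some, evalFrom_cons]
    have : (wit a b M j (j+1)).step (0, ⟨j, by omega⟩) a = some (0, ⟨j + 1, by omega⟩) := by
      simp [wit, hab, show j ≠ 0 by omega]
    rw [this]
    rfl

theorem wit_trCountOn {α : Type} {a b : α} (M h t : ℕ) :
    (wit a b M h t).trCountOn b = h := by
  unfold trCountOn
  have : {q | ((wit a b M h t).step q b).isSome} =
      Set.range (fun j : Fin h => ((0 : ZMod M), (⟨j.1, by omega⟩ : Fin (h + 2)))) := by
    ext ⟨r, k⟩
    simp only [wit, Set.mem_ofPred_eq, if_true, Set.mem_range, Prod.ext_iff, Fin.ext_iff]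
    constructor
    · intro hs
      split_ifs at hs with hc
      · exact ⟨⟨k, hc.2⟩, hc.1.symm, rfl⟩
      · simp at hs
    · rintro ⟨j, h1, h2⟩
      rw [dif_pos ⟨h1.symm, by have := j.2; omega⟩]
      rfl
  rw [this, ← Set.image_univ, Set.ncard_image_of_injective, Set.ncard_univ, Nat.card_fin]
  intro i j hij
  simpa [Fin.ext_iff] using hij

end IDFA

theorem le_tcOn {α : Type} (L : Set (List α)) (b : α) (hL : IsRegularLang L) (n : ℕ)
    (w u : Fin n → List α) (hu : ∀ i, w i ++ b :: u i ∈ L)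
    (hd : ∀ i j, i < j → ∃ v, ¬ (w i ++ v ∈ L ↔ w j ++ v ∈ L)) :
    n ≤ tcOn L b := by
  obtain ⟨σ, hσ, A, hA⟩ := hL
  refine le_csInf (Set.nonempty_of_mem (x := A.trCountOn b) ⟨σ, hσ, A, hA, rfl⟩) ?_
  rintro m ⟨τ, hτ, B, rfl, rfl⟩
  exact B.le_trCountOn b n w u hu hd

/-- the `b`-transition complexity of a union can be arbitrarily
large compared with the `b`-transition complexities of the arguments. -/
theorem tcOn_union_unbounded {α : Type} [Finite α] (hcard : 2 ≤ Nat.card α) (b : α)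
    (h₁ h₂ M : ℕ) (hh₁ : 1 ≤ h₁) (hh₂ : 1 ≤ h₂) (hM : 1 ≤ M) :
    ∃ L₁ L₂ : Set (List α), IsRegularLang L₁ ∧ IsRegularLang L₂ ∧
      tcOn L₁ b = h₁ ∧ tcOn L₂ b = h₂ ∧ M ≤ tcOn (L₁ ∪ L₂) b := by
  classical
  have : NeZero M := ⟨by omega⟩
  obtain ⟨a, hab⟩ : ∃ a, a ≠ b := by
    have : Nontrivial α := (Finite.one_lt_card_iff_nontrivial).1 (by omega)
    exact exists_ne b
  have r1 : IsRegularLang (IDFA.wit a b 1 h₁ h₁).accepts := ⟨_, inferInstance, _, rfl⟩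
  have r2 : IsRegularLang (IDFA.wit a b M h₂ (h₂ + 1)).accepts := ⟨_, inferInstance, _, rfl⟩
  have r3 : IsRegularLang ((IDFA.wit a b 1 h₁ h₁).accepts ∪
    (IDFA.wit a b M h₂ (h₂ + 1)).accepts) := ⟨_, inferInstance, _, IDFA.prodU_accepts _ _⟩
  have z1 : ∀ x : ZMod 1, x = 0 := fun x => Subsingleton.elim _ _
  refine ⟨_, _, r1, r2, le_antisymm ?_ ?_, le_antisymm ?_ ?_, ?_⟩
  · exact Nat.sInf_le ⟨_, inferInstance, _, rfl, IDFA.wit_trCountOn _ _ _⟩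
  · have key : ∀ j, List.replicate j b ∈ (IDFA.wit a b 1 h₁ h₁).accepts ↔ j = h₁ := by
      intro j
      have := IDFA.mem_wit_ab hab 1 h₁ 0 j
      simpa using this
    apply le_tcOn _ _ r1 _ (fun i => List.replicate i b) (fun i => List.replicate (h₁ - i - 1) b)
    · intro i
      rw [← List.replicate_succ, ← List.replicate_add, key]
      omega
    · intro i j hij
      refine ⟨List.replicate (h₁ - i) b, ?_⟩
      rw [← List.replicate_add, ← List.replicate_add, key, key]
      have : i.1 < j.1 := hij
      omega
  · exact Nat.sInf_le ⟨_, inferInstance, _, rfl, IDFA.wit_trCountOn _ _ _⟩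
  · have key : ∀ j, 1 ≤ j → (List.replicate j b ++ [a] ∈
        (IDFA.wit a b M h₂ (h₂ + 1)).accepts ↔ j = h₂) := by
      intro j hj
      have := IDFA.mem_wit_aba hab M h₂ (h₂ + 1) 0 j hj
      simpa using this
    apply le_tcOn _ _ r2 _ (fun i => List.replicate i b)
      (fun i => List.replicate (h₂ - i - 1) b ++ [a])
    · intro i
      rw [← List.cons_append, ← List.replicate_succ, ← List.append_assoc, ← List.replicate_add,
        key _ (by omega)]
      omega
    · intro i j hij
      refine ⟨List.replicate (h₂ - i) b ++ [a], ?_⟩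
      have : i.1 < j.1 := hij
      rw [← List.append_assoc, ← List.append_assoc, ← List.replicate_add, ← List.replicate_add,
        key _ (by omega), key _ (by omega)]
      omega
  · apply le_tcOn _ _ r3 _ (fun i => List.replicate i a) (fun i => List.replicate (h₁ - 1) b)
    · intro i
      left
      rw [← List.replicate_succ, IDFA.mem_wit_ab hab]
      exact ⟨z1 _, by omega⟩
    · intro i j hij
      have : i.1 < j.1 := hij
      refine ⟨List.replicate (M - j) a ++ (List.replicate h₂ b ++ [a]), ?_⟩
      simp only [← List.append_assoc, ← List.replicate_add, Set.mem_union,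
        IDFA.mem_wit_aba hab _ _ _ _ _ hh₂]
      intro hiff
      have h2 := hiff.2 (Or.inr ⟨by rw [Nat.add_sub_cancel' j.2.le]; simp, by simp⟩)
      rcases h2 with h2 | h2
      · omega
      · have h3 := (ZMod.natCast_eq_zero_iff _ _).1 h2.1
        have := Nat.le_of_dvd (by omega) h3
        omega
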